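/- arXiv:math/9809080 — 2 statements merged into one kernel-verified Lean document; each statement's English description precedes it below -/
import Mathlib

section
/- Let ℬ ⊆ 𝒜 be a unital *-subalgebra and let s₁, …, s_k ∈ 𝒜 be self-adjoint elements which form their own conjugate system with respect to ℬ: for every n ≥ 0, all b₀, …, bₙ ∈ ℬ and all i, i₁, …, iₙ ∈ {1, …, k}: φ(s_i b₀ s_{i₁} b₁ ⋯ s_{iₙ} bₙ) = Σ_{m=1}^{n} δ_{i, iₘ} φ(b₀ s_{i₁} ⋯ s_{i_{m−1}} b_{m−1}) φ(bₘ s_{i_{m+1}} ⋯ s_{iₙ} bₙ). Then each s_i is standard semicircular in moments: φ(s_i^{2m}) = Cₘ (the m-th Catalan number) and φ(s_i^{2m+1}) = 0 for all m ≥ 0; and the sets {s₁}, …, {s_k}, ℬ are free with respect to φ. (Lemma 5.4.) -/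
open scoped BigOperators
open ComplexOrder

noncomputable section

variable {A : Type*} [Ring A] [Algebra ℂ A] [StarRing A] [StarModule ℂ A]

/-- Selection: index `0` gives `x`, index `1` gives `star x`. -/
def sel {T : Type*} [Star T] (x : T) (i : Fin 2) : T := if i = 0 then x else star x

/-- The word `b₀ x₁ b₁ x₂ b₂ ⋯ xₙ bₙ`. -/
def interWord {T : Type*} [Ring T] {n : ℕ} (bs : Fin (n + 1) → T) (xs : Fin n → T) : T :=
  bs 0 * (List.ofFn fun m : Fin n => xs m * bs m.succ).prod

/-- For `m : Fin n` (standing for the paper's index `m+1 ∈ {1, …, n}`), the prefix word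
`b₀ x₁ b₁ ⋯ xₘ bₘ`. -/
def preWord {T : Type*} [Ring T] {n : ℕ} (bs : Fin (n + 1) → T) (xs : Fin n → T)
    (m : Fin n) : T :=
  bs 0 * ((List.ofFn fun j : Fin n => xs j * bs j.succ).take (m : ℕ)).prod

/-- For `m : Fin n` (standing for the paper's index `m+1 ∈ {1, …, n}`), the suffix word
`b_{m+1} x_{m+2} b_{m+2} ⋯ xₙ bₙ`. -/
def sufWord {T : Type*} [Ring T] {n : ℕ} (bs : Fin (n + 1) → T) (xs : Fin n → T)
    (m : Fin n) : T :=
  bs m.succ * ((List.ofFn fun j : Fin n => xs j * bs j.succ).drop ((m : ℕ) + 1)).prod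

/-- The normalized trace `φ_d = tr ⊗ φ` on `M_d(𝒜)`. -/
def phid {d : ℕ} (φ : A →ₗ[ℂ] ℂ) (X : Matrix (Fin d) (Fin d) A) : ℂ :=
  (∑ i, φ (X i i)) / d

/-- The entry `a_{kl}^{(ε)}` selected by an index triple `(k, l, ε)`:
`ε = 0` gives `a_{kl}`, `ε = 1` gives `(a_{kl})*`. -/
def ent {d : ℕ} (a : Fin d → Fin d → A) (t : Fin d × Fin d × Fin 2) : A :=
  if t.2.2 = 0 then a t.1 t.2.1 else star (a t.1 t.2.1)

/-- The family `{ξ_ij, ξ_ij*}` fulfills the conjugate relations for `{a_ij, a_ij*}`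
with respect to a unital *-subalgebra `B`. -/
def FamConjRel {d : ℕ} (φ : A →ₗ[ℂ] ℂ) (B : StarSubalgebra ℂ A)
    (a ξ : Fin d → Fin d → A) : Prop :=
  ∀ (n : ℕ) (bs : Fin (n + 1) → A) (idx : Fin n → Fin d × Fin d × Fin 2)
    (t : Fin d × Fin d × Fin 2),
    (∀ m, bs m ∈ B) →
    φ (ent ξ t * interWord bs fun m => ent a (idx m)) =
      ∑ m : Fin n,
        (if idx m = t then
          φ (preWord bs (fun j => ent a (idx j)) m) *
            φ (sufWord bs (fun j => ent a (idx j)) m)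
        else 0)

/-- `Xm` fulfills the conjugate relations for the matrix `Am` (paired with its adjoint,
matching on the index `e`) with respect to the matrices satisfying `P`. -/
def MatFamConjRel {d : ℕ} (φd : Matrix (Fin d) (Fin d) A → ℂ)
    (P : Matrix (Fin d) (Fin d) A → Prop)
    (Am Xm : Matrix (Fin d) (Fin d) A) (e : Fin 2) : Prop :=
  ∀ (n : ℕ) (Bs : Fin (n + 1) → Matrix (Fin d) (Fin d) A) (i : Fin n → Fin 2),
    (∀ m, P (Bs m)) →
    φd (Xm * interWord Bs fun m => sel Am (i m)) =
      ∑ m : Fin n,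
        (if i m = e then
          φd (preWord Bs (fun j => sel Am (i j)) m) *
            φd (sufWord Bs (fun j => sel Am (i j)) m)
        else 0)

/-- Freeness of a family of subsets of `T` with respect to a state `φ`. -/
def AreFree {T : Type*} [Ring T] [Algebra ℂ T] {ι : Type*} (φ : T → ℂ) (S : ι → Set T) :
    Prop :=
  ∀ (n : ℕ) (t : Fin (n + 1) → ι) (z : Fin (n + 1) → T),
    (∀ m, z m ∈ Algebra.adjoin ℂ (S (t m))) →
    (∀ m, φ (z m) = 0) →
    (∀ m : Fin n, t m.castSucc ≠ t m.succ) →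
    φ ((List.ofFn z).prod) = 0

/-!
The conjugate relations say that `φ (s i * x) = (φ ⊗ φ) (∂ᵢ x)`, where `∂ᵢ` is the free difference
quotient: the derivation into `R ⊗ R` that kills `B` and sends `s j` to `δᵢⱼ 1 ⊗ 1`. Since
`∂ᵢ (s i ^ d) = ∑ s i ^ j ⊗ s i ^ (d - 1 - j)`, the moments of `s i` satisfy the Catalan recursion.

For freeness, one shows `φ (y * z₁ ⋯ zₙ) = 0` whenever `z₁ ⋯ zₙ` is a nonempty alternating product
of centered factors and `y`, not necessarily centered, is taken from an algebra other than that of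
`z₁`, by induction on `n`. If `y = s i ^ (d + 1)`, then `∂ᵢ` of `s i ^ d * z₁ ⋯ zₙ` splits either
inside `s i ^ d`, which leaves a factor `φ (s i ^ e * z₁ ⋯ zₙ)` with `e < d`, or inside some
`zₘ` from the algebra of `s i`, which by traciality leaves a factor `φ (s i ^ e * z₁ ⋯ zₘ₋₁)`. If
`y ∈ B`, then traciality moves `zₙ` to the front, where it either is absorbed by `y` or plays the
role of `y`.
-/

section FreeDifferenceQuotient

open TensorProduct

variable {K R ι : Type*} [CommRing K] [Ring R] [Algebra K R]

lemma interWord_cons_mul {n : ℕ} (b : R) (bs : Fin (n + 1) → R) (xs : Fin n → R) :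
    interWord (Fin.cons (b * bs 0) (Fin.tail bs)) xs = b * interWord bs xs := by
  simp [interWord, Fin.tail, mul_assoc]

lemma interWord_cons {n : ℕ} (b x : R) (bs : Fin (n + 1) → R) (xs : Fin n → R) :
    interWord (Fin.cons b bs : Fin (n + 2) → R) (Fin.cons x xs) = b * (x * interWord bs xs) := by
  simp [interWord, List.ofFn_succ, mul_assoc]

/-- The functional `φ ⊗ φ` on `R ⊗ R`. -/
def tensorSquare (φ : R →ₗ[K] K) : R ⊗[K] R →ₗ[K] K :=
  dualDistrib K R R (φ ⊗ₜ φ)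

@[simp]
lemma tensorSquare_tmul (φ : R →ₗ[K] K) (x y : R) :
    tensorSquare φ (x ⊗ₜ y) = φ x * φ y :=
  rfl

variable [DecidableEq ι]

/-- `ξ` is a conjugate system for `s` with respect to the subalgebra `B`. -/
def IsConjugateSystem (φ : R →ₗ[K] K) (B : Subalgebra K R) (s ξ : ι → R) : Prop :=
  ∀ (n : ℕ) (bs : Fin (n + 1) → R) (idx : Fin n → ι) (i : ι),
    (∀ m, bs m ∈ B) →
    φ (ξ i * interWord bs fun m => s (idx m)) =
      ∑ m : Fin n,
        (if idx m = i then
          φ (preWord bs (fun j => s (idx j)) m) * φ (sufWord bs (fun j => s (idx j)) m)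
        else 0)

/-- The free difference quotient, in direction `i`, of the formal word
`b₀ s_{i₁} b₁ ⋯ s_{iₙ} bₙ`. -/
def wordDiffQuot (K : Type*) [CommRing K] [Algebra K R] (s : ι → R) (i : ι) {n : ℕ}
    (bs : Fin (n + 1) → R) (idx : Fin n → ι) : R ⊗[K] R :=
  ∑ m : Fin n,
    if idx m = i then
      preWord bs (fun j => s (idx j)) m ⊗ₜ[K] sufWord bs (fun j => s (idx j)) m
    else 0

lemma wordDiffQuot_cons_mul (s : ι → R) (i : ι) {n : ℕ} (b : R) (bs : Fin (n + 1) → R)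
    (idx : Fin n → ι) :
    wordDiffQuot K s i (Fin.cons (b * bs 0) (Fin.tail bs)) idx =
      (b ⊗ₜ 1) * wordDiffQuot K s i bs idx := by
  simp [wordDiffQuot, Finset.mul_sum, preWord, sufWord, Fin.tail, mul_assoc]

lemma wordDiffQuot_one_cons (s : ι → R) (i j : ι) {n : ℕ} (bs : Fin (n + 1) → R)
    (idx : Fin n → ι) :
    wordDiffQuot K s i (Fin.cons 1 bs : Fin (n + 2) → R) (Fin.cons j idx) =
      (s j ⊗ₜ 1) * wordDiffQuot K s i bs idx +
        (if j = i then 1 else 0) * (1 ⊗ₜ interWord bs fun m => s (idx m)) := by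
  rw [wordDiffQuot, Fin.sum_univ_succ, add_comm]
  congr 1
  · simp [wordDiffQuot, Finset.mul_sum, preWord, sufWord, List.ofFn_succ, mul_assoc]
  · simp [preWord, sufWord, interWord, List.ofFn_succ, ite_mul]

/-- `HasFreeDiffQuot B s i x d` says that `d` is a value at `x` of the free difference quotient
in direction `i`, the derivation that kills `B` and sends `s j` to `δᵢⱼ 1 ⊗ 1`. It is a relation
because `d` depends on how `x` is written as a polynomial in the `s j` with coefficients in `B`. -/
inductive HasFreeDiffQuot (B : Subalgebra K R) (s : ι → R) (i : ι) : R → R ⊗[K] R → Prop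
  | of_mem {b : R} (hb : b ∈ B) : HasFreeDiffQuot B s i b 0
  | gen (j : ι) : HasFreeDiffQuot B s i (s j) (if j = i then 1 else 0)
  | add {x y : R} {d e : R ⊗[K] R} (hx : HasFreeDiffQuot B s i x d)
      (hy : HasFreeDiffQuot B s i y e) : HasFreeDiffQuot B s i (x + y) (d + e)
  | mul {x y : R} {d e : R ⊗[K] R} (hx : HasFreeDiffQuot B s i x d)
      (hy : HasFreeDiffQuot B s i y e) :
      HasFreeDiffQuot B s i (x * y) ((x ⊗ₜ 1) * e + d * (1 ⊗ₜ y))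

/-- Sums of pairs consisting of a word with coefficients in `B` and its free difference quotient. -/
def wordDiffQuotPairs (B : Subalgebra K R) (s : ι → R) (i : ι) : AddSubmonoid (R × R ⊗[K] R) :=
  AddSubmonoid.closure {p | ∃ (n : ℕ) (bs : Fin (n + 1) → R) (idx : Fin n → ι), (∀ m, bs m ∈ B) ∧
    (interWord bs fun m => s (idx m), wordDiffQuot K s i bs idx) = p}

variable {B : Subalgebra K R} {s : ι → R} {i : ι}

lemma word_mem_wordDiffQuotPairs {n : ℕ} {bs : Fin (n + 1) → R} (hbs : ∀ m, bs m ∈ B)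
    (idx : Fin n → ι) :
    (interWord bs fun m => s (idx m), wordDiffQuot K s i bs idx) ∈ wordDiffQuotPairs B s i :=
  AddSubmonoid.subset_closure ⟨n, bs, idx, hbs, rfl⟩

lemma one_mem_wordDiffQuotPairs : ((1, 0) : R × R ⊗[K] R) ∈ wordDiffQuotPairs B s i := by
  simpa [interWord, wordDiffQuot] using
    word_mem_wordDiffQuotPairs (s := s) (i := i) (bs := fun _ => 1) (fun _ => B.one_mem) Fin.elim0

lemma coeff_mul_mem_wordDiffQuotPairs {b : R} (hb : b ∈ B) {p : R × R ⊗[K] R}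
    (hp : p ∈ wordDiffQuotPairs B s i) :
    (b * p.1, (b ⊗ₜ 1) * p.2) ∈ wordDiffQuotPairs B s i := by
  induction hp using AddSubmonoid.closure_induction with
  | mem p hp =>
    obtain ⟨n, bs, idx, hbs, rfl⟩ := hp
    rw [← interWord_cons_mul, ← wordDiffQuot_cons_mul]
    refine word_mem_wordDiffQuotPairs (Fin.cases ?_ fun m => ?_) idx
    · exact B.mul_mem hb (hbs 0)
    · exact hbs m.succ
  | zero => simp [Prod.mk_zero_zero]
  | add p q _ _ hp hq => simpa [mul_add] using add_mem hp hq

lemma gen_mul_mem_wordDiffQuotPairs (j : ι) {p : R × R ⊗[K] R}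
    (hp : p ∈ wordDiffQuotPairs B s i) :
    (s j * p.1, (s j ⊗ₜ 1) * p.2 + (if j = i then 1 else 0) * (1 ⊗ₜ p.1)) ∈
      wordDiffQuotPairs B s i := by
  induction hp using AddSubmonoid.closure_induction with
  | mem p hp =>
    obtain ⟨n, bs, idx, hbs, rfl⟩ := hp
    have hword : s j * interWord bs (fun m => s (idx m)) =
        interWord (Fin.cons 1 bs : Fin (n + 2) → R)
          fun m => s ((Fin.cons j idx : Fin (n + 1) → ι) m) := by
      rw [← one_mul (s j * _), ← interWord_cons]
      congr 1
      exact funext (Fin.cases rfl fun _ => rfl)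
    rw [hword, ← wordDiffQuot_one_cons]
    exact word_mem_wordDiffQuotPairs (Fin.cases B.one_mem hbs) _
  | zero => simp [Prod.mk_zero_zero]
  | add p q _ _ hp hq =>
    simpa [mul_add, tmul_add, add_add_add_comm] using add_mem hp hq

namespace HasFreeDiffQuot

variable {x : R} {d : R ⊗[K] R}

lemma mul_mem_wordDiffQuotPairs (h : HasFreeDiffQuot B s i x d) {p : R × R ⊗[K] R}
    (hp : p ∈ wordDiffQuotPairs B s i) :
    (x * p.1, (x ⊗ₜ 1) * p.2 + d * (1 ⊗ₜ p.1)) ∈ wordDiffQuotPairs B s i := by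
  induction h generalizing p with
  | of_mem hb => simpa using coeff_mul_mem_wordDiffQuotPairs hb hp
  | gen j => exact gen_mul_mem_wordDiffQuotPairs j hp
  | add _ _ ihx ihy =>
    convert add_mem (ihx hp) (ihy hp) using 1
    simp only [add_mul, add_tmul, Prod.mk_add_mk, add_add_add_comm]
  | @mul x y d e _ _ ihx ihy =>
    have hxy : (x * y) ⊗ₜ[K] (1 : R) = (x ⊗ₜ 1) * (y ⊗ₜ 1) := by simp
    have hyp : (1 : R) ⊗ₜ[K] (y * p.1) = (1 ⊗ₜ y) * (1 ⊗ₜ p.1) := by simp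
    convert ihx (ihy hp) using 1
    simp only [hxy, hyp, mul_add, add_mul, mul_assoc, add_assoc]

lemma mem_wordDiffQuotPairs (h : HasFreeDiffQuot B s i x d) :
    (x, d) ∈ wordDiffQuotPairs B s i := by
  simpa [← Algebra.TensorProduct.one_def] using
    h.mul_mem_wordDiffQuotPairs one_mem_wordDiffQuotPairs

lemma apply_conjugate_mul {φ : R →ₗ[K] K} {ξ : ι → R} (hξ : IsConjugateSystem φ B s ξ)
    (h : HasFreeDiffQuot B s i x d) : φ (ξ i * x) = tensorSquare φ d := by
  suffices ∀ p ∈ wordDiffQuotPairs B s i, φ (ξ i * p.1) = tensorSquare φ p.2 from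
    this _ h.mem_wordDiffQuotPairs
  intro p hp
  induction hp using AddSubmonoid.closure_induction with
  | mem p hp =>
    obtain ⟨n, bs, idx, hbs, rfl⟩ := hp
    simp only [hξ n bs idx i hbs, wordDiffQuot, map_sum, apply_ite (tensorSquare φ),
      tensorSquare_tmul, map_zero]
  | zero => simp
  | add p q _ _ hp hq => simp [mul_add, hp, hq]

lemma one : HasFreeDiffQuot B s i 1 0 :=
  of_mem B.one_mem

lemma smul (c : K) (h : HasFreeDiffQuot B s i x d) : HasFreeDiffQuot B s i (c • x) (c • d) := by
  simpa [Algebra.smul_def] using (of_mem (B.algebraMap_mem c)).mul h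

lemma sum {α : Type*} (t : Finset α) {x : α → R} {d : α → R ⊗[K] R}
    (h : ∀ a ∈ t, HasFreeDiffQuot B s i (x a) (d a)) :
    HasFreeDiffQuot B s i (∑ a ∈ t, x a) (∑ a ∈ t, d a) := by
  induction t using Finset.cons_induction with
  | empty => simpa using of_mem B.zero_mem
  | cons a t ha ih =>
    simp only [Finset.sum_cons]
    exact (h a (t.mem_cons_self a)).add (ih fun b hb => h b (Finset.mem_cons_of_mem hb))

lemma pow (h : HasFreeDiffQuot B s i x d) (n : ℕ) :
    HasFreeDiffQuot B s i (x ^ n)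
      (∑ j ∈ Finset.range n, ((x ^ j) ⊗ₜ 1) * d * (1 ⊗ₜ (x ^ (n - 1 - j)))) := by
  induction n with
  | zero => simpa using one
  | succ n ih =>
    rw [pow_succ']
    convert h.mul ih using 1
    rw [Finset.sum_range_succ', Finset.mul_sum]
    congr 1
    · refine Finset.sum_congr rfl fun j _ => ?_
      simp [pow_succ', ← mul_assoc, Nat.sub_sub, add_comm]
    · simp [← Algebra.TensorProduct.one_def]

lemma aeval (h : HasFreeDiffQuot B s i x d) (p : Polynomial K) :
    HasFreeDiffQuot B s i (Polynomial.aeval x p)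
      (∑ n ∈ Finset.range (p.natDegree + 1),
        p.coeff n • ∑ j ∈ Finset.range n, ((x ^ j) ⊗ₜ 1) * d * (1 ⊗ₜ (x ^ (n - 1 - j)))) := by
  rw [Polynomial.aeval_eq_sum_range]
  exact sum _ fun n _ => (h.pow n).smul (p.coeff n)

lemma gen_pow (i : ι) (n : ℕ) :
    HasFreeDiffQuot B s i (s i ^ n)
      (∑ j ∈ Finset.range n, (s i ^ j) ⊗ₜ (s i ^ (n - 1 - j))) := by
  simpa using (gen (B := B) (s := s) (i := i) i).pow n

end HasFreeDiffQuot

end FreeDifferenceQuotient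

section Moments

open Finset

section Sequence

variable {K : Type*} [CommRing K] {m : ℕ → K}

lemma odd_eq_zero_of_catalan_recursion (h1 : m 1 = 0)
    (hm : ∀ n, m (n + 2) = ∑ p ∈ antidiagonal n, m p.1 * m p.2) (n : ℕ) :
    m (2 * n + 1) = 0 := by
  induction n using Nat.strong_induction_on with
  | _ n ih =>
    rcases n with _ | n
    · exact h1
    rw [show 2 * (n + 1) + 1 = 2 * n + 1 + 2 by ring, hm]
    refine sum_eq_zero fun p hp => ?_
    rw [HasAntidiagonal.mem_antidiagonal] at hp
    obtain ⟨l, hl | hl⟩ := Nat.even_or_odd' p.1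
    · rw [show p.2 = 2 * (n - l) + 1 by omega, ih (n - l) (by omega), mul_zero]
    · rw [hl, ih l (by omega), zero_mul]

lemma sum_antidiagonal_two_mul (hodd : ∀ n, m (2 * n + 1) = 0) (n : ℕ) :
    ∑ p ∈ antidiagonal (2 * n), m p.1 * m p.2 =
      ∑ p ∈ antidiagonal n, m (2 * p.1) * m (2 * p.2) := by
  symm
  refine sum_of_injOn (fun p => (2 * p.1, 2 * p.2)) ?_ ?_ ?_ fun p _ => rfl
  · intro p _ q _ hpq
    simpa [Prod.ext_iff] using hpq
  · intro p hp
    simp only [mem_coe, HasAntidiagonal.mem_antidiagonal] at hp ⊢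
    omega
  · intro p hp hp_image
    rw [HasAntidiagonal.mem_antidiagonal] at hp
    obtain ⟨l, hl | hl⟩ := Nat.even_or_odd' p.1
    · refine absurd ⟨(l, n - l), ?_, ?_⟩ hp_image
      · simp only [mem_coe, HasAntidiagonal.mem_antidiagonal]
        omega
      · exact Prod.ext hl.symm (by simp only; omega)
    · rw [hl, hodd, zero_mul]

lemma even_eq_catalan_of_catalan_recursion (h0 : m 0 = 1) (h1 : m 1 = 0)
    (hm : ∀ n, m (n + 2) = ∑ p ∈ antidiagonal n, m p.1 * m p.2) (n : ℕ) :
    m (2 * n) = catalan n := by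
  induction n using Nat.strong_induction_on with
  | _ n ih =>
    rcases n with _ | n
    · simpa using h0
    rw [mul_add_one, hm, sum_antidiagonal_two_mul (odd_eq_zero_of_catalan_recursion h1 hm),
      catalan_succ']
    push_cast
    refine sum_congr rfl fun p hp => ?_
    rw [HasAntidiagonal.mem_antidiagonal] at hp
    rw [ih p.1 (by omega), ih p.2 (by omega)]

end Sequence

variable {K R ι : Type*} [CommRing K] [Ring R] [Algebra K R] [DecidableEq ι]
  {φ : R →ₗ[K] K} {B : Subalgebra K R} {s : ι → R}

lemma apply_pow_succ_eq_sum (hs : IsConjugateSystem φ B s s) (i : ι) (n : ℕ) :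
    φ (s i ^ (n + 1)) = ∑ j ∈ range n, φ (s i ^ j) * φ (s i ^ (n - 1 - j)) := by
  rw [pow_succ', (HasFreeDiffQuot.gen_pow i n).apply_conjugate_mul hs]
  simp

lemma semicircular_moments (hφ1 : φ 1 = 1) (hs : IsConjugateSystem φ B s s) (i : ι) (n : ℕ) :
    φ (s i ^ (2 * n)) = catalan n ∧ φ (s i ^ (2 * n + 1)) = 0 := by
  have h0 : φ (s i ^ 0) = 1 := by rwa [pow_zero]
  have h1 : φ (s i ^ 1) = 0 := by simpa using apply_pow_succ_eq_sum hs i 0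
  have hrec : ∀ n, φ (s i ^ (n + 2)) = ∑ p ∈ antidiagonal n, φ (s i ^ p.1) * φ (s i ^ p.2) := by
    intro n
    rw [apply_pow_succ_eq_sum hs,
      Nat.sum_antidiagonal_eq_sum_range_succ fun a b => φ (s i ^ a) * φ (s i ^ b)]
    rfl
  exact ⟨even_eq_catalan_of_catalan_recursion (m := fun n => φ (s i ^ n)) h0 h1 hrec n,
    odd_eq_zero_of_catalan_recursion (m := fun n => φ (s i ^ n)) h1 hrec n⟩

end Moments

section AlternatingProducts

variable {K R τ : Type*} [CommRing K] [Ring R] [Algebra K R]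

/-- The list `L` of labelled elements consists of elements of the correspondingly labelled
subalgebras which are centered with respect to `φ`, and neighbouring labels differ. -/
structure IsAlternatingCentered (φ : R →ₗ[K] K) (S : τ → Subalgebra K R) (L : List (τ × R)) :
    Prop where
  mem : ∀ a ∈ L, a.2 ∈ S a.1
  centered : ∀ a ∈ L, φ a.2 = 0
  isChain : L.IsChain fun a b => a.1 ≠ b.1

/-- Freeness of a family of subalgebras over an arbitrary commutative ring, with alternating
products encoded as lists of labelled elements. -/
def IsFreeFamily (φ : R →ₗ[K] K) (S : τ → Subalgebra K R) : Prop :=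
  ∀ L : List (τ × R), L ≠ [] → IsAlternatingCentered φ S L → φ (L.map Prod.snd).prod = 0

/-- `φ` vanishes on `y * z₁ ⋯ zₙ`, where `L` lists the `zₘ`, whenever `y` is taken from a
subalgebra with a label other than that of `z₁`. The element `y` need not be centered. -/
def VanishesAfterNewLabel (φ : R →ₗ[K] K) (S : τ → Subalgebra K R) (L : List (τ × R)) : Prop :=
  ∀ t, (∀ a ∈ L.head?, t ≠ a.1) → ∀ y ∈ S t, φ (y * (L.map Prod.snd).prod) = 0

/-- The induction hypothesis of the freeness proof: `VanishesAfterNewLabel` for all nonempty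
alternating centered products of fewer than `n` factors. -/
def VanishesBelowLength (φ : R →ₗ[K] K) (S : τ → Subalgebra K R) (n : ℕ) : Prop :=
  ∀ L : List (τ × R), L.length < n → L ≠ [] → IsAlternatingCentered φ S L →
    VanishesAfterNewLabel φ S L

namespace IsAlternatingCentered

variable {φ : R →ₗ[K] K} {S : τ → Subalgebra K R}

lemma of_cons {a : τ × R} {L : List (τ × R)} (h : IsAlternatingCentered φ S (a :: L)) :
    IsAlternatingCentered φ S L :=
  ⟨fun b hb => h.mem b (List.mem_cons_of_mem a hb),
    fun b hb => h.centered b (List.mem_cons_of_mem a hb), h.isChain.of_cons⟩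

lemma left_of_append {L M : List (τ × R)} (h : IsAlternatingCentered φ S (L ++ M)) :
    IsAlternatingCentered φ S L :=
  ⟨fun b hb => h.mem b (List.mem_append_left M hb),
    fun b hb => h.centered b (List.mem_append_left M hb), h.isChain.left_of_append⟩

lemma cons {t : τ} {z : R} {L : List (τ × R)} (h : IsAlternatingCentered φ S L)
    (hz : z ∈ S t) (hφz : φ z = 0) (ht : ∀ a ∈ L.head?, t ≠ a.1) :
    IsAlternatingCentered φ S ((t, z) :: L) :=
  ⟨List.forall_mem_cons.2 ⟨hz, h.mem⟩, List.forall_mem_cons.2 ⟨hφz, h.centered⟩,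
    List.isChain_cons.2 ⟨ht, h.isChain⟩⟩

lemma apply_prod_eq_zero {L : List (τ × R)} (h : IsAlternatingCentered φ S L) (hL : L ≠ [])
    (ih : VanishesBelowLength φ S L.length) :
    φ (L.map Prod.snd).prod = 0 := by
  obtain ⟨a, M, rfl⟩ := List.exists_cons_of_ne_nil hL
  rcases eq_or_ne M [] with rfl | hM
  · simpa using h.centered a List.mem_cons_self
  · rw [List.map_cons, List.prod_cons]
    exact ih M (by simp) hM h.of_cons a.1 (List.isChain_cons.1 h.isChain).1 a.2
      (h.mem a List.mem_cons_self)

end IsAlternatingCentered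

lemma isFreeFamily_of_vanishesAfterNewLabel {φ : R →ₗ[K] K} {S : τ → Subalgebra K R}
    (h : ∀ L, L ≠ [] → IsAlternatingCentered φ S L → VanishesAfterNewLabel φ S L) :
    IsFreeFamily φ S :=
  fun _ hL hLS => hLS.apply_prod_eq_zero hL fun M _ => h M

lemma IsFreeFamily.areFree {T : Type*} [Ring T] [Algebra ℂ T] {φ : T →ₗ[ℂ] ℂ}
    {S : τ → Subalgebra ℂ T} (h : IsFreeFamily φ S) {X : τ → Set T}
    (hX : ∀ t, Algebra.adjoin ℂ (X t) ≤ S t) : AreFree (fun x => φ x) X := by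
  intro n t z hz hφz ht
  have hL : IsAlternatingCentered φ S (List.ofFn fun m => (t m, z m)) :=
    ⟨List.forall_mem_ofFn_iff.2 fun m => hX _ (hz m), List.forall_mem_ofFn_iff.2 hφz,
      List.isChain_ofFn.2 fun m hm => ht ⟨m, by omega⟩⟩
  simpa [List.map_ofFn, Function.comp_def] using h _ (by simp) hL

end AlternatingProducts

section Freeness

open TensorProduct

variable {K R ι : Type*} [CommRing K] [Ring R] [Algebra K R]

/-- The algebras whose freeness is at stake: `B`, labelled `none`, and for each `i` the algebra
generated by `s i`, labelled `some i`. -/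
def letterAlgebra (B : Subalgebra K R) (s : ι → R) (t : Option ι) : Subalgebra K R :=
  t.elim B fun i => Algebra.adjoin K {s i}

variable {φ : R →ₗ[K] K} {B : Subalgebra K R} {s : ι → R} {i : ι} {L : List (Option ι × R)}

lemma adjoin_le_letterAlgebra (s : ι → R) (t : Option ι) :
    Algebra.adjoin K (t.elim (B : Set R) fun i => {s i}) ≤ letterAlgebra B s t := by
  cases t with
  | none => exact (Algebra.adjoin_eq B).le
  | some i => exact le_rfl

lemma exists_aeval_eq_of_mem_letterAlgebra_some {z : R} (hz : z ∈ letterAlgebra B s (some i)) :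
    ∃ p : Polynomial K, Polynomial.aeval (s i) p = z :=
  Algebra.adjoin_mem_exists_aeval K (s i) hz

lemma gen_pow_mem_letterAlgebra (n : ℕ) : s i ^ n ∈ letterAlgebra B s (some i) :=
  pow_mem (Algebra.self_mem_adjoin_singleton K (s i)) n

lemma apply_coeff_mul_eq_zero (hφ1 : φ 1 = 1) (hφtr : ∀ x y, φ (x * y) = φ (y * x))
    (hL : L ≠ []) (hLS : IsAlternatingCentered φ (letterAlgebra B s) L)
    (hnone : ∀ a ∈ L.head?, none ≠ a.1)
    (ih : VanishesBelowLength φ (letterAlgebra B s) L.length)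
    (hgen : ∀ M, M.length = L.length → M ≠ [] →
      IsAlternatingCentered φ (letterAlgebra B s) M → ∀ i, (∀ a ∈ M.head?, some i ≠ a.1) →
      ∀ y ∈ letterAlgebra B s (some i), φ (y * (M.map Prod.snd).prod) = 0)
    {y : R} (hy : y ∈ B) : φ (y * (L.map Prod.snd).prod) = 0 := by
  have hφL := hLS.apply_prod_eq_zero hL ih
  obtain ⟨M, ⟨t, c⟩, rfl⟩ := (List.eq_nil_or_concat' L).resolve_left hL
  have hc : c ∈ letterAlgebra B s t := hLS.mem (t, c) (by simp)
  have hM := hLS.left_of_append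
  have hMnone : ∀ a ∈ M.head?, none ≠ a.1 :=
    fun a ha => hnone a (List.mem_head?_append_of_mem_head? ha)
  have hrotate (x : R) : φ (x * ((M ++ [(t, c)]).map Prod.snd).prod) =
      φ (c * x * (M.map Prod.snd).prod) := by
    rw [List.map_append, List.prod_append, ← mul_assoc, hφtr]
    simp [mul_assoc]
  cases t with
  | none =>
    have hM_ne : M ≠ [] := by
      rintro rfl
      exact hnone (none, c) rfl rfl
    rw [hrotate]
    exact ih M (by simp) hM_ne hM none hMnone _ (B.mul_mem hc hy)
  | some i =>
    set y' : R := y - φ y • 1 with hy'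
    have hφy' : φ y' = 0 := by simp [hy', hφ1]
    have hy'B : y' ∈ B := sub_mem hy (B.smul_mem B.one_mem _)
    have hvanish := hgen ((none, y') :: M) (by simp) (by simp) (hM.cons hy'B hφy' hMnone) i
      (by simp) c hc
    rw [List.map_cons, List.prod_cons, ← mul_assoc, ← hrotate, hy', sub_mul, map_sub] at hvanish
    rwa [smul_mul_assoc, one_mul, map_smul, hφL, smul_zero, sub_zero] at hvanish

variable [DecidableEq ι]

lemma exists_hasFreeDiffQuot_of_mem_letterAlgebra (φ : R →ₗ[K] K) (i : ι) {t : Option ι} {z : R}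
    (hz : z ∈ letterAlgebra B s t) :
    ∃ d, HasFreeDiffQuot B s i z d ∧ ∀ P Q : R, (t = some i → ∀ n, φ (P * s i ^ n) = 0) →
      tensorSquare φ ((P ⊗ₜ 1) * d * (1 ⊗ₜ Q)) = 0 := by
  cases t with
  | none => exact ⟨0, .of_mem hz, by simp⟩
  | some j =>
    obtain ⟨p, rfl⟩ := exists_aeval_eq_of_mem_letterAlgebra_some hz
    refine ⟨_, (HasFreeDiffQuot.gen j).aeval p, fun P Q hP => ?_⟩
    by_cases hji : j = i
    · subst hji
      simp [Finset.mul_sum, Finset.sum_mul, hP rfl]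
    · simp [hji]

/-- The part of `∂ᵢ` coming from a factor `z` labelled `some i` is a sum of tensors whose left
components are `x * s i ^ n`, where `x` is the product of the factors before `z`. -/
lemma exists_hasFreeDiffQuot_prod (φ : R →ₗ[K] K) (i : ι)
    (hL : ∀ a ∈ L, a.2 ∈ letterAlgebra B s a.1) :
    ∃ d, HasFreeDiffQuot B s i (L.map Prod.snd).prod d ∧ ∀ P : R,
      (∀ L₁ z L₂, L = L₁ ++ (some i, z) :: L₂ →
        ∀ n, φ (P * (L₁.map Prod.snd).prod * s i ^ n) = 0) →
      tensorSquare φ ((P ⊗ₜ 1) * d) = 0 := by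
  induction L with
  | nil => exact ⟨0, .one, by simp⟩
  | cons a L ih =>
    obtain ⟨ha, hL⟩ := List.forall_mem_cons.1 hL
    obtain ⟨d, hd, hd_vanish⟩ := exists_hasFreeDiffQuot_of_mem_letterAlgebra φ i ha
    obtain ⟨e, he, he_vanish⟩ := ih hL
    refine ⟨_, hd.mul he, fun P hP => ?_⟩
    have hhead : tensorSquare φ ((P ⊗ₜ 1) * d * (1 ⊗ₜ (L.map Prod.snd).prod)) = 0 :=
      hd_vanish P _ fun hai n => by simpa using hP [] a.2 L (by simp [← hai]) n
    have htail : tensorSquare φ (((P * a.2) ⊗ₜ 1) * e) = 0 :=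
      he_vanish (P * a.2) fun L₁ z L₂ hsplit n => by
        simpa [mul_assoc] using hP (a :: L₁) z L₂ (by simp [hsplit]) n
    rw [← List.prod_eq_foldr, mul_add, map_add, ← mul_assoc, ← mul_assoc, hhead,
      Algebra.TensorProduct.tmul_mul_tmul, mul_one, htail, add_zero]

lemma apply_gen_pow_mul_eq_zero (hφtr : ∀ x y, φ (x * y) = φ (y * x))
    (hs : IsConjugateSystem φ B s s) (hL : L ≠ [])
    (hLS : IsAlternatingCentered φ (letterAlgebra B s) L) (hi : ∀ a ∈ L.head?, some i ≠ a.1)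
    (ih : VanishesBelowLength φ (letterAlgebra B s) L.length) (n : ℕ) :
    φ (s i ^ n * (L.map Prod.snd).prod) = 0 := by
  induction n using Nat.strong_induction_on with
  | _ n ihn =>
    rcases n with _ | n
    · simpa using hLS.apply_prod_eq_zero hL ih
    obtain ⟨d, hd, hd_vanish⟩ := exists_hasFreeDiffQuot_prod φ i hLS.mem
    have hprefix : ∀ L₁ z L₂, L = L₁ ++ (some i, z) :: L₂ →
        ∀ m, φ (s i ^ n * (L₁.map Prod.snd).prod * s i ^ m) = 0 := by
      rintro L₁ z L₂ rfl m
      have hL₁ : L₁ ≠ [] := by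
        rintro rfl
        exact hi (some i, z) rfl rfl
      rw [hφtr, ← mul_assoc, ← pow_add]
      exact ih L₁ (by simp) hL₁ hLS.left_of_append (some i)
        (fun a ha => hi a (List.mem_head?_append_of_mem_head? ha)) _ (gen_pow_mem_letterAlgebra _)
    rw [pow_succ', mul_assoc, ((HasFreeDiffQuot.gen_pow i n).mul hd).apply_conjugate_mul hs,
      map_add, hd_vanish _ hprefix, zero_add, Finset.sum_mul, map_sum]
    refine Finset.sum_eq_zero fun j hj => ?_
    have hj := Finset.mem_range.1 hj
    simp [ihn (n - 1 - j) (by omega)]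

lemma apply_mul_eq_zero_of_mem_letterAlgebra_some (hφtr : ∀ x y, φ (x * y) = φ (y * x))
    (hs : IsConjugateSystem φ B s s) (hL : L ≠ [])
    (hLS : IsAlternatingCentered φ (letterAlgebra B s) L) (hi : ∀ a ∈ L.head?, some i ≠ a.1)
    (ih : VanishesBelowLength φ (letterAlgebra B s) L.length)
    {y : R} (hy : y ∈ letterAlgebra B s (some i)) : φ (y * (L.map Prod.snd).prod) = 0 := by
  obtain ⟨p, rfl⟩ := exists_aeval_eq_of_mem_letterAlgebra_some hy
  simp [Polynomial.aeval_eq_sum_range, Finset.sum_mul,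
    apply_gen_pow_mul_eq_zero hφtr hs hL hLS hi ih]

lemma vanishesAfterNewLabel_letterAlgebra (hφ1 : φ 1 = 1)
    (hφtr : ∀ x y, φ (x * y) = φ (y * x)) (hs : IsConjugateSystem φ B s s) (hL : L ≠ [])
    (hLS : IsAlternatingCentered φ (letterAlgebra B s) L) :
    VanishesAfterNewLabel φ (letterAlgebra B s) L := by
  induction hn : L.length using Nat.strong_induction_on generalizing L with
  | _ n ih =>
    have ih : VanishesBelowLength φ (letterAlgebra B s) n :=
      fun M hlt hM hMS => ih M.length hlt hM hMS rfl
    subst hn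
    rintro (_ | i) ht y hy
    · refine apply_coeff_mul_eq_zero hφ1 hφtr hL hLS ht ih (fun M hlen hM hMS i hi z hz => ?_) hy
      exact apply_mul_eq_zero_of_mem_letterAlgebra_some hφtr hs hM hMS hi (hlen ▸ ih) hz
    · exact apply_mul_eq_zero_of_mem_letterAlgebra_some hφtr hs hL hLS ht ih hy

theorem self_conjugate_family_is_semicircular_and_free_general (hφ1 : φ 1 = 1)
    (hφtr : ∀ x y, φ (x * y) = φ (y * x)) (hs : IsConjugateSystem φ B s s) :
    (∀ i n, φ (s i ^ (2 * n)) = catalan n ∧ φ (s i ^ (2 * n + 1)) = 0) ∧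
      IsFreeFamily φ (letterAlgebra B s) :=
  ⟨semicircular_moments hφ1 hs, isFreeFamily_of_vanishesAfterNewLabel fun _ hL hLS =>
    vanishesAfterNewLabel_letterAlgebra hφ1 hφtr hs hL hLS⟩

end Freeness

/-- Lemma 5.4: if the self-adjoint family `s₁, …, s_k` is its own conjugate system
with respect to `ℬ`, then each `s_i` is standard semicircular in moments, and the sets
`{s₁}, …, {s_k}, ℬ` are free. -/
theorem self_conjugate_family_is_semicircular_and_free
    (φ : A →ₗ[ℂ] ℂ)
    (hφ1 : φ 1 = 1)
    (hφpos : ∀ x : A, 0 ≤ φ (star x * x))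
    (hφtr : ∀ x y : A, φ (x * y) = φ (y * x))
    (B : StarSubalgebra ℂ A)
    (k : ℕ) (s : Fin k → A)
    (hsa : ∀ i, star (s i) = s i)
    (hconj : ∀ (n : ℕ) (bs : Fin (n + 1) → A) (idx : Fin n → Fin k) (i : Fin k),
      (∀ m, bs m ∈ B) →
      φ (s i * interWord bs fun m => s (idx m)) =
        ∑ m : Fin n,
          (if idx m = i then
            φ (preWord bs (fun j => s (idx j)) m) * φ (sufWord bs (fun j => s (idx j)) m)
          else 0)) :
    (∀ (i : Fin k) (m : ℕ),
      φ (s i ^ (2 * m)) = catalan m ∧ φ (s i ^ (2 * m + 1)) = 0) ∧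
    AreFree (fun x => φ x)
      (fun t : Option (Fin k) => t.elim (B : Set A) fun i => {s i}) := by
  have h := self_conjugate_family_is_semicircular_and_free_general
    (B := B.toSubalgebra) hφ1 hφtr hconj
  exact ⟨h.1, h.2.areFree (adjoin_le_letterAlgebra s)⟩
end
end

section
/- Let u ∈ 𝒜 be a Haar unitary and let p = p* ∈ 𝒜 satisfy φ(p^k) = 0 for every odd k ≥ 1, with {u, u*} free from {p}; set c := up (so c is R-diagonal). Let a ∈ 𝒜 be such that {a, a*} is free from {c, c*} with respect to φ. Then the self-adjoint matrices A := [[0, a],[a*, 0]] and S := [[0, c],[c*, 0]] in M₂(𝒜) are free with respect to φ₂: the sets {A} and {S} are free in (M₂(𝒜), φ₂). (Proposition 5.1.) -/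
open scoped BigOperators
open ComplexOrder

noncomputable section

variable {A : Type*} [Ring A] [Algebra ℂ A] [StarRing A]

/-- 2×2 matrices over `A`. -/
abbrev M₂ (A : Type*) := Matrix (Fin 2) (Fin 2) A

/-- The state `φ₂ = tr ⊗ φ` on `M₂(𝒜)`. -/
def phi2 (φ : A →ₗ[ℂ] ℂ) (X : M₂ A) : ℂ := (φ (X 0 0) + φ (X 1 1)) / 2

/-- The matrix `[[0, a], [a*, 0]]`. -/
def Amat (a : A) : M₂ A := !![0, a; star a, 0]

/-!
R-diagonality of `c` is used in the following form: if `X₁, …, Xₙ` are centered elements of the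
algebra generated by `Amat c`, then `φ (X₁ i₁ j₁ * ⋯ * Xₙ iₙ jₙ) = 0` as soon as `jₘ ≠ iₘ₊₁` for
all `m`.

Expand an alternating product of centered elements of the algebras generated by `Amat a` and
`Amat c` entrywise. By traciality the diagonal entries of a centered `X` in the algebra of `Amat a`
are centered, so writing each entry as `X i j = (X i j - φ (X i j)) + φ (X i j)` leaves a scalar
only where `i ≠ j`. Such a scalar glues together two entries from the algebra of `Amat c` whose
facing indices differ, and R-diagonality says that the resulting words are centered. What remains
are alternating centered products in `{a, star a}` and `{c, star c}`.

For `c = u * p`, conjugation by `diagonal ![u, 1]` turns `Amat p` into `Amat c`. Where facing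
indices differ, an isolated `u` or `star u` survives between centered polynomials in `p`, so
freeness of `u` and `p` gives R-diagonality.
-/

section Freeness

variable {T ι : Type*} [Ring T] [Algebra ℂ T] {φ : T → ℂ} {S : ι → Set T}

/-- `CenteredAltProd φ S t y` says that `y` is a possibly empty product of centered elements of the
algebras generated by the `S s`, with distinct neighbouring indices, whose first index differs
from `t`. Thus `y` may be preceded by an element of the algebra generated by `S t`. -/
inductive CenteredAltProd (φ : T → ℂ) (S : ι → Set T) : ι → T → Prop
  | one (t : ι) : CenteredAltProd φ S t 1
  | cons {s t : ι} {x y : T} (hst : s ≠ t) (hx : x ∈ Algebra.adjoin ℂ (S s)) (hx0 : φ x = 0)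
      (hy : CenteredAltProd φ S s y) : CenteredAltProd φ S t (x * y)

theorem CenteredAltProd.exists_ofFn_eq_mul {s : ι} {y : T} (hy : CenteredAltProd φ S s y) :
    ∀ x ∈ Algebra.adjoin ℂ (S s), φ x = 0 →
      ∃ (n : ℕ) (t : Fin (n + 1) → ι) (z : Fin (n + 1) → T), t 0 = s ∧
        (∀ m, z m ∈ Algebra.adjoin ℂ (S (t m))) ∧ (∀ m, φ (z m) = 0) ∧
        (∀ m : Fin n, t m.castSucc ≠ t m.succ) ∧ (List.ofFn z).prod = x * y := by
  induction hy with
  | one s =>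
    intro x hx hx0
    exact ⟨0, fun _ => s, fun _ => x, rfl, fun _ => hx, fun _ => hx0, fun m => m.elim0, by simp⟩
  | @cons s s' x' y' hss' hx' hx0' _ ih =>
    intro x hx hx0
    obtain ⟨n, t, z, ht0, hz, hz0, ht, hprod⟩ := ih x' hx' hx0'
    refine ⟨n + 1, Fin.cons s' t, Fin.cons x z, rfl, ?_, ?_, ?_, ?_⟩
    · exact Fin.cases hx hz
    · exact Fin.cases hx0 hz0
    · refine Fin.cases ?_ fun m => ?_
      · simpa [ht0] using hss'.symm
      · simpa [← Fin.succ_castSucc] using ht m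
    · rw [List.ofFn_cons, List.prod_cons, hprod]

theorem centeredAltProd_ofFn_succ :
    ∀ (n : ℕ) (t : Fin (n + 1) → ι) (z : Fin (n + 1) → T),
      (∀ m, z m ∈ Algebra.adjoin ℂ (S (t m))) → (∀ m, φ (z m) = 0) →
      (∀ m : Fin n, t m.castSucc ≠ t m.succ) →
      CenteredAltProd φ S (t 0) (List.ofFn fun m : Fin n => z m.succ).prod
  | 0, t, _, _, _, _ => by simpa using CenteredAltProd.one (t 0)
  | n + 1, t, z, hz, hz0, ht => by
    rw [List.ofFn_succ, List.prod_cons]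
    exact .cons (ht 0).symm (hz 1) (hz0 1) <|
      centeredAltProd_ofFn_succ n (fun m => t m.succ) (fun m => z m.succ) (fun m => hz m.succ)
        (fun m => hz0 m.succ) fun m => ht m.succ

theorem areFree_iff_centeredAltProd :
    AreFree φ S ↔ ∀ (s : ι) (x y : T), x ∈ Algebra.adjoin ℂ (S s) → φ x = 0 →
      CenteredAltProd φ S s y → φ (x * y) = 0 := by
  constructor
  · intro hfree s x y hx hx0 hy
    obtain ⟨n, t, z, -, hz, hz0, ht, hprod⟩ := hy.exists_ofFn_eq_mul x hx hx0
    exact hprod ▸ hfree n t z hz hz0 ht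
  · intro h n t z hz hz0 ht
    rw [List.ofFn_succ, List.prod_cons]
    exact h (t 0) _ _ (hz 0) (hz0 0) (centeredAltProd_ofFn_succ n t z hz hz0 ht)

end Freeness

section GeneratedAlgebra

variable {T : Type*} [Ring T] [Algebra ℂ T]

theorem eqOn_adjoin_singleton {N : Type*} [AddCommGroup N] [Module ℂ N] {f g : T →ₗ[ℂ] N} {x : T}
    (h : ∀ n : ℕ, f (x ^ n) = g (x ^ n)) : Set.EqOn f g (Algebra.adjoin ℂ {x}) := by
  intro y hy
  rw [SetLike.mem_coe, ← Subalgebra.mem_toSubmodule, Algebra.adjoin_eq_span] at hy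
  refine LinearMap.eqOn_span (fun z hz => ?_) hy
  obtain ⟨n, rfl⟩ := Submonoid.mem_closure_singleton.1 hz
  exact h n

theorem exists_conj_of_mem_adjoin_conj [StarRing T] {v x y : T} (hv : v ∈ unitary T)
    (hy : y ∈ Algebra.adjoin ℂ {v * x * star v}) :
    ∃ z ∈ Algebra.adjoin ℂ {x}, v * z * star v = y := by
  let conj : T →ₐ[ℂ] T := (Unitary.conjStarAlgAut ℂ T ⟨v, hv⟩).toAlgEquiv
  rwa [show v * x * star v = conj x from rfl, ← AlgHom.map_adjoin_singleton] at hy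

theorem mul_mem_of_mem_span {D : Set T} {N : Submodule ℂ T} {x y : T}
    (hy : y ∈ Submodule.span ℂ D) (h : ∀ d ∈ D, x * d ∈ N) : x * y ∈ N :=
  (Submodule.span_le (p := N.comap (LinearMap.mulLeft ℂ x))).2 h hy

theorem sub_smul_one_mem_adjoin {D : Set T} {x : T} (hx : x ∈ Algebra.adjoin ℂ D) (r : ℂ) :
    x - r • 1 ∈ Algebra.adjoin ℂ D :=
  sub_mem hx (Subalgebra.smul_mem _ (one_mem _) r)

theorem map_sub_smul_one {φ : T →ₗ[ℂ] ℂ} (hφ1 : φ 1 = 1) (x : T) : φ (x - φ x • 1) = 0 := by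
  simp [hφ1]

end GeneratedAlgebra

section Hermitization

theorem apply_mem_adjoin_of_mem_adjoin_Amat {b : A} {X : M₂ A}
    (hX : X ∈ Algebra.adjoin ℂ {Amat b}) (i j : Fin 2) :
    X i j ∈ Algebra.adjoin ℂ {b, star b} := by
  suffices Algebra.adjoin ℂ {Amat b} ≤ (Algebra.adjoin ℂ {b, star b}).matrix from this hX i j
  have hb : b ∈ Algebra.adjoin ℂ {b, star b} := Algebra.subset_adjoin (by simp)
  have hb' : star b ∈ Algebra.adjoin ℂ {b, star b} := Algebra.subset_adjoin (by simp)
  rw [Algebra.adjoin_le_iff, Set.singleton_subset_iff]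
  intro i j
  fin_cases i <;> fin_cases j <;> simp [Amat, hb, hb']

theorem phi2_mul_comm {B : Type*} [Ring B] [Algebra ℂ B] {φ : B →ₗ[ℂ] ℂ}
    (hφtr : ∀ x y : B, φ (x * y) = φ (y * x)) (X Y : M₂ B) :
    phi2 φ (X * Y) = phi2 φ (Y * X) := by
  simp only [phi2, Matrix.mul_apply, Fin.sum_univ_two, map_add, hφtr (Y _ _)]
  ring

variable {φ : A →ₗ[ℂ] ℂ}

theorem map_apply_zero_zero_eq_map_apply_one_one (hφtr : ∀ x y : A, φ (x * y) = φ (y * x)) {b : A}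
    {X : M₂ A} (hX : X ∈ Algebra.adjoin ℂ {Amat b}) : φ (X 0 0) = φ (X 1 1) := by
  refine eqOn_adjoin_singleton (f := φ ∘ₗ Matrix.entryLinearMap ℂ A 0 0)
    (g := φ ∘ₗ Matrix.entryLinearMap ℂ A 1 1) (fun n => ?_) hX
  change φ ((Amat b ^ n) 0 0) = φ ((Amat b ^ n) 1 1)
  cases n with
  | zero => simp
  | succ n =>
    calc φ ((Amat b ^ (n + 1)) 0 0) = φ ((Amat b ^ n) 0 1 * star b) := by
          rw [pow_succ, Matrix.mul_apply]; simp [Amat]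
      _ = φ (star b * (Amat b ^ n) 0 1) := hφtr _ _
      _ = φ ((Amat b ^ (n + 1)) 1 1) := by
          rw [pow_succ', Matrix.mul_apply]; simp [Amat]

theorem map_apply_self_eq_zero_of_mem_adjoin_Amat (hφtr : ∀ x y : A, φ (x * y) = φ (y * x)) {b : A}
    {X : M₂ A} (hX : X ∈ Algebra.adjoin ℂ {Amat b}) (hX0 : phi2 φ X = 0) (i : Fin 2) :
    φ (X i i) = 0 := by
  have hdiag := map_apply_zero_zero_eq_map_apply_one_one hφtr hX
  have h11 : φ (X 1 1) = 0 := by simpa [phi2, hdiag] using hX0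
  fin_cases i
  · exact hdiag.trans h11
  · exact h11

end Hermitization

section RDiagonal

/-- A product `X₁ i j₁ * X₂ i₂ j₂ * ⋯ * Xₙ iₙ jₙ` with `n ≥ 1`, where the `Xₘ` are centered elements
of the algebra generated by `Amat c` and facing indices differ: `jₘ ≠ iₘ₊₁`. The predicate records
the first row index `i`. -/
inductive MismatchedWord (φ : A →ₗ[ℂ] ℂ) (c : A) : Fin 2 → A → Prop
  | entry {X : M₂ A} (hX : X ∈ Algebra.adjoin ℂ {Amat c}) (hX0 : phi2 φ X = 0) (i j : Fin 2) :
      MismatchedWord φ c i (X i j)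
  | cons {X : M₂ A} (hX : X ∈ Algebra.adjoin ℂ {Amat c}) (hX0 : phi2 φ X = 0) (i : Fin 2)
      {j k : Fin 2} (hjk : j ≠ k) {w : A} (hw : MismatchedWord φ c k w) :
      MismatchedWord φ c i (X i j * w)

/-- R-diagonality of `c` with respect to a tracial `φ`, in the moment formulation of Nica,
Shlyakhtenko and Speicher: the entries of elements of the algebra generated by `Amat c` are of the
form `P (c * star c)`, `P (star c * c)`, `c * Q (star c * c)` and `star c * Q (c * star c)`, with
polynomials `P` and `Q`. -/
def IsRDiagonal (φ : A →ₗ[ℂ] ℂ) (c : A) : Prop :=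
  ∀ ⦃i : Fin 2⦄ ⦃w : A⦄, MismatchedWord φ c i w → φ w = 0

theorem MismatchedWord.mem_adjoin {φ : A →ₗ[ℂ] ℂ} {c w : A} {i : Fin 2}
    (hw : MismatchedWord φ c i w) : w ∈ Algebra.adjoin ℂ {c, star c} := by
  induction hw with
  | entry hX _ i j => exact apply_mem_adjoin_of_mem_adjoin_Amat hX i j
  | cons hX _ i _ _ ih => exact mul_mem (apply_mem_adjoin_of_mem_adjoin_Amat hX i _) ih

end RDiagonal

section UnitaryMulEven

theorem Amat_pow_two_mul {B : Type*} [Ring B] [StarRing B] {p : B} (hp : star p = p) (n : ℕ) :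
    Amat p ^ (2 * n) = Matrix.diagonal fun _ => p ^ (2 * n) := by
  have hsq : Amat p ^ 2 = Matrix.diagonal fun _ => p ^ 2 := by
    ext i j
    fin_cases i <;> fin_cases j <;> simp [Amat, hp, pow_two]
  rw [pow_mul, hsq, Matrix.diagonal_pow]
  simp only [Pi.pow_def, pow_mul]

theorem diagonal_mem_unitary {B n : Type*} [Ring B] [StarRing B] [Fintype n] [DecidableEq n]
    {d : n → B} (hd : ∀ i, d i ∈ unitary B) : Matrix.diagonal d ∈ unitary (Matrix n n B) := by
  simp only [Unitary.mem_iff, Matrix.star_eq_conjTranspose, Matrix.diagonal_conjTranspose,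
    Matrix.diagonal_mul_diagonal, Pi.star_apply, fun i => (Unitary.mem_iff.1 (hd i)).1,
    fun i => (Unitary.mem_iff.1 (hd i)).2, Matrix.diagonal_one, and_self]

theorem vecCons_one_mem_unitary {B : Type*} [Monoid B] [StarMul B] {u : B} (hu : u ∈ unitary B)
    (i : Fin 2) : ![u, 1] i ∈ unitary B := by
  fin_cases i
  · exact hu
  · exact one_mem _

theorem star_vecCons_one_mul_vecCons_one_mem {B : Type*} [Monoid B] [StarMul B] (u : B)
    {i j : Fin 2} (hij : i ≠ j) : star (![u, 1] i) * ![u, 1] j ∈ ({u, star u} : Set B) := by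
  fin_cases i <;> fin_cases j <;> simp at hij ⊢

theorem diagonal_mul_Amat_mul_star_diagonal {B : Type*} [Ring B] [StarRing B] (u : B) {p : B}
    (hp : star p = p) :
    Matrix.diagonal ![u, 1] * Amat p * star (Matrix.diagonal ![u, 1]) = Amat (u * p) := by
  ext i j
  rw [Matrix.star_eq_conjTranspose, Matrix.diagonal_conjTranspose, Matrix.mul_diagonal,
    Matrix.diagonal_mul]
  fin_cases i <;> fin_cases j <;> simp [Amat, hp]

variable {φ : A →ₗ[ℂ] ℂ} {u p : A}

theorem map_apply_eq_zero_of_mem_adjoin_Amat_of_ne (hp : star p = p)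
    (hodd : ∀ k : ℕ, Odd k → φ (p ^ k) = 0) {F : M₂ A} (hF : F ∈ Algebra.adjoin ℂ {Amat p})
    {i j : Fin 2} (hij : i ≠ j) : φ (F i j) = 0 := by
  refine eqOn_adjoin_singleton (f := φ ∘ₗ Matrix.entryLinearMap ℂ A i j) (g := 0)
    (fun n => ?_) hF
  change φ ((Amat p ^ n) i j) = 0
  rcases Nat.even_or_odd' n with ⟨k, rfl | rfl⟩
  · rw [Amat_pow_two_mul hp, Matrix.diagonal_apply_ne _ hij, map_zero]
  · have hentry : Amat p i j = p := by
      fin_cases i <;> fin_cases j <;> simp [Amat, hp] at hij ⊢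
    rw [pow_succ, Amat_pow_two_mul hp, Matrix.diagonal_mul, hentry, ← pow_succ]
    exact hodd _ ⟨k, rfl⟩

theorem exists_centered_apply_eq_conj (hφtr : ∀ x y : A, φ (x * y) = φ (y * x)) (hu : u ∈ unitary A)
    (hp : star p = p) (hodd : ∀ k : ℕ, Odd k → φ (p ^ k) = 0)
    {X : M₂ A} (hX : X ∈ Algebra.adjoin ℂ {Amat (u * p)}) (hX0 : phi2 φ X = 0) (i j : Fin 2) :
    ∃ f ∈ Algebra.adjoin ℂ {p}, φ f = 0 ∧ X i j = ![u, 1] i * f * star (![u, 1] j) := by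
  have hV : Matrix.diagonal ![u, 1] ∈ unitary (M₂ A) :=
    diagonal_mem_unitary (vecCons_one_mem_unitary hu)
  rw [← diagonal_mul_Amat_mul_star_diagonal u hp] at hX
  obtain ⟨F, hF, rfl⟩ := exists_conj_of_mem_adjoin_conj hV hX
  have hF0 : phi2 φ F = 0 := by
    rwa [phi2_mul_comm hφtr, ← mul_assoc, Unitary.star_mul_self_of_mem hV, one_mul] at hX0
  refine ⟨F i j, by simpa [hp] using apply_mem_adjoin_of_mem_adjoin_Amat hF i j, ?_, ?_⟩
  · rcases eq_or_ne i j with rfl | hij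
    · exact map_apply_self_eq_zero_of_mem_adjoin_Amat hφtr hF hF0 i
    · exact map_apply_eq_zero_of_mem_adjoin_Amat_of_ne hp hodd hF hij
  · rw [Matrix.star_eq_conjTranspose, Matrix.diagonal_conjTranspose, Matrix.mul_diagonal,
      Matrix.diagonal_mul, Pi.star_apply]

theorem MismatchedWord.exists_conj_centeredAltProd (hφtr : ∀ x y : A, φ (x * y) = φ (y * x))
    (hu : u ∈ unitary A) (hu0 : ∀ g ∈ ({u, star u} : Set A), φ g = 0)
    (hp : star p = p) (hodd : ∀ k : ℕ, Odd k → φ (p ^ k) = 0)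
    {i : Fin 2} {w : A} (hw : MismatchedWord φ (u * p) i w) :
    ∃ (k : Fin 2) (f v : A), f ∈ Algebra.adjoin ℂ {p} ∧ φ f = 0 ∧
      CenteredAltProd φ ![{u, star u}, {p}] 1 v ∧
      w = ![u, 1] i * (f * v) * star (![u, 1] k) := by
  induction hw with
  | entry hX hX0 i j =>
    obtain ⟨f, hf, hf0, hXij⟩ := exists_centered_apply_eq_conj hφtr hu hp hodd hX hX0 i j
    exact ⟨j, f, 1, hf, hf0, .one 1, by rw [hXij, mul_one]⟩
  | @cons X hX hX0 i j k hjk w _ ih =>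
    obtain ⟨f, hf, hf0, hXij⟩ := exists_centered_apply_eq_conj hφtr hu hp hodd hX hX0 i j
    obtain ⟨l, f', v, hf', hf0', hv, rfl⟩ := ih
    have hg := star_vecCons_one_mul_vecCons_one_mem u hjk
    refine ⟨l, f, star (![u, 1] j) * ![u, 1] k * (f' * v), hf, hf0, ?_, ?_⟩
    · exact .cons (s := 0) zero_ne_one (Algebra.subset_adjoin hg) (hu0 _ hg)
        (.cons (s := 1) one_ne_zero hf' hf0' hv)
    · simp only [hXij, mul_assoc]

theorem isRDiagonal_unitary_mul (hφtr : ∀ x y : A, φ (x * y) = φ (y * x))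
    (hu : u ∈ unitary A) (hu0 : ∀ g ∈ ({u, star u} : Set A), φ g = 0)
    (hp : star p = p) (hodd : ∀ k : ℕ, Odd k → φ (p ^ k) = 0)
    (hfree : AreFree φ ![{u, star u}, {p}]) : IsRDiagonal φ (u * p) := by
  intro i w hw
  rw [areFree_iff_centeredAltProd] at hfree
  obtain ⟨k, f, v, hf, hf0, hv, rfl⟩ := hw.exists_conj_centeredAltProd hφtr hu hu0 hp hodd
  rw [hφtr, ← mul_assoc]
  rcases eq_or_ne k i with rfl | hki
  · rw [Unitary.star_mul_self_of_mem (vecCons_one_mem_unitary hu k), one_mul]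
    exact hfree 1 f v hf hf0 hv
  · have hg := star_vecCons_one_mul_vecCons_one_mem u hki
    exact hfree 0 _ _ (Algebra.subset_adjoin hg) (hu0 _ hg)
      (.cons (s := 1) one_ne_zero hf hf0 hv)

end UnitaryMulEven

section FreeFromRDiagonal

/-- The words `w * r` with `w` a mismatched word in `c` with first row index `i` and `r` an
alternating centered product in `{a, star a}` and `{c, star c}` that does not begin with `c`. They
span the entries in row `i` of products that begin with a centered element of the algebra generated
by `Amat c`. -/
def reducedWords (φ : A →ₗ[ℂ] ℂ) (a c : A) (i : Fin 2) : Set A :=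
  {y | ∃ w r, MismatchedWord φ c i w ∧
    CenteredAltProd φ ![{a, star a}, {c, star c}] 1 r ∧ y = w * r}

/-- The words that span the entries in row `i` of products that do not begin with the algebra
generated by `Amat c`. The second kind arises when the scalar part of an entry `X i k`, `k ≠ i`, of
an element of the algebra generated by `Amat a` multiplies a reduced word. -/
def coreducedWords (φ : A →ₗ[ℂ] ℂ) (a c : A) (i : Fin 2) : Set A :=
  {y | CenteredAltProd φ ![{a, star a}, {c, star c}] 1 y ∨ ∃ k ≠ i, y ∈ reducedWords φ a c k}

variable {φ : A →ₗ[ℂ] ℂ} {a c : A}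

theorem centeredAltProd_of_mem_reducedWords (hc : IsRDiagonal φ c) {i : Fin 2} {y : A}
    (hy : y ∈ reducedWords φ a c i) : CenteredAltProd φ ![{a, star a}, {c, star c}] 0 y := by
  obtain ⟨w, r, hw, hr, rfl⟩ := hy
  exact .cons (s := 1) one_ne_zero hw.mem_adjoin (hc hw) hr

theorem map_eq_zero_of_mem_reducedWords (hc : IsRDiagonal φ c)
    (hfree : AreFree φ ![{a, star a}, {c, star c}]) {i : Fin 2} {y : A}
    (hy : y ∈ reducedWords φ a c i) : φ y = 0 := by
  obtain ⟨w, r, hw, hr, rfl⟩ := hy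
  exact areFree_iff_centeredAltProd.1 hfree 1 w r hw.mem_adjoin (hc hw) hr

theorem map_mul_eq_zero_of_mem_reducedWords (hφ1 : φ 1 = 1) (hc : IsRDiagonal φ c)
    (hfree : AreFree φ ![{a, star a}, {c, star c}]) {x y : A}
    (hx : x ∈ Algebra.adjoin ℂ {a, star a}) {i : Fin 2} (hy : y ∈ reducedWords φ a c i) :
    φ (x * y) = 0 := by
  have hcentered : φ ((x - φ x • 1) * y) = 0 :=
    areFree_iff_centeredAltProd.1 hfree 0 _ y (sub_smul_one_mem_adjoin hx _)
      (map_sub_smul_one hφ1 x) (centeredAltProd_of_mem_reducedWords hc hy)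
  simpa [sub_mul, map_eq_zero_of_mem_reducedWords hc hfree hy] using hcentered

theorem apply_mul_mem_reducedWords {X : M₂ A} (hX : X ∈ Algebra.adjoin ℂ {Amat c})
    (hX0 : phi2 φ X = 0) (i : Fin 2) {k : Fin 2} {y : A} (hy : y ∈ coreducedWords φ a c k) :
    X i k * y ∈ reducedWords φ a c i := by
  rcases hy with hy | ⟨l, hlk, w, r, hw, hr, rfl⟩
  · exact ⟨X i k, y, .entry hX hX0 i k, hy, rfl⟩
  · exact ⟨X i k * w, r, .cons hX hX0 i hlk.symm hw, hr, (mul_assoc _ _ _).symm⟩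

theorem apply_mul_mem_span_coreducedWords (hφ1 : φ 1 = 1)
    (hφtr : ∀ x y : A, φ (x * y) = φ (y * x)) {X : M₂ A} (hX : X ∈ Algebra.adjoin ℂ {Amat a})
    (hX0 : phi2 φ X = 0) (i : Fin 2) {k : Fin 2} {y : A}
    (hy : CenteredAltProd φ ![{a, star a}, {c, star c}] 0 y)
    (hyi : k ≠ i → y ∈ coreducedWords φ a c i) :
    X i k * y ∈ Submodule.span ℂ (coreducedWords φ a c i) := by
  have hXik := sub_smul_one_mem_adjoin (apply_mem_adjoin_of_mem_adjoin_Amat hX i k) (φ (X i k))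
  have hcentered : (X i k - φ (X i k) • 1) * y ∈ coreducedWords φ a c i :=
    Or.inl (.cons (s := 0) zero_ne_one hXik (map_sub_smul_one hφ1 _) hy)
  have hscalar : φ (X i k) • y ∈ Submodule.span ℂ (coreducedWords φ a c i) := by
    rcases eq_or_ne k i with rfl | hki
    · simp [map_apply_self_eq_zero_of_mem_adjoin_Amat hφtr hX hX0 k]
    · exact Submodule.smul_mem _ _ (Submodule.subset_span (hyi hki))
  have hsplit : X i k * y = (X i k - φ (X i k) • 1) * y + φ (X i k) • y := by
    simp [sub_mul]
  exact hsplit ▸ add_mem (Submodule.subset_span hcentered) hscalar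

theorem mul_apply_mem_span_reducedWords {X Y : M₂ A} (hX : X ∈ Algebra.adjoin ℂ {Amat c})
    (hX0 : phi2 φ X = 0) (hY : ∀ i j, Y i j ∈ Submodule.span ℂ (coreducedWords φ a c i))
    (i j : Fin 2) : (X * Y) i j ∈ Submodule.span ℂ (reducedWords φ a c i) := by
  rw [Matrix.mul_apply]
  exact sum_mem fun k _ => mul_mem_of_mem_span (hY k j) fun _ hy =>
    Submodule.subset_span (apply_mul_mem_reducedWords hX hX0 i hy)

theorem mul_apply_mem_span_coreducedWords (hφ1 : φ 1 = 1)
    (hφtr : ∀ x y : A, φ (x * y) = φ (y * x)) (hc : IsRDiagonal φ c)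
    {X Y : M₂ A} (hX : X ∈ Algebra.adjoin ℂ {Amat a}) (hX0 : phi2 φ X = 0)
    (hY : ∀ i j, Y i j ∈ Submodule.span ℂ (reducedWords φ a c i))
    (i j : Fin 2) : (X * Y) i j ∈ Submodule.span ℂ (coreducedWords φ a c i) := by
  rw [Matrix.mul_apply]
  exact sum_mem fun k _ => mul_mem_of_mem_span (hY k j) fun _ hy =>
    apply_mul_mem_span_coreducedWords hφ1 hφtr hX hX0 i
      (centeredAltProd_of_mem_reducedWords hc hy) fun hki => Or.inr ⟨k, hki, hy⟩

theorem CenteredAltProd.apply_mem_span (hφ1 : φ 1 = 1)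
    (hφtr : ∀ x y : A, φ (x * y) = φ (y * x)) (hc : IsRDiagonal φ c) {t : Fin 2} {Y : M₂ A}
    (hY : CenteredAltProd (phi2 φ) ![{Amat a}, {Amat c}] t Y) :
    (t = 0 → Y = 1 ∨ ∀ i j, Y i j ∈ Submodule.span ℂ (reducedWords φ a c i)) ∧
      (t = 1 → ∀ i j, Y i j ∈ Submodule.span ℂ (coreducedWords φ a c i)) := by
  induction hY with
  | one t =>
    refine ⟨fun _ => Or.inl rfl, fun _ i j => ?_⟩
    rw [Matrix.one_apply]
    split_ifs
    · exact Submodule.subset_span (Or.inl (.one 1))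
    · exact zero_mem _
  | @cons s t X Y hst hX hX0 _ ih =>
    constructor
    · rintro rfl
      obtain rfl : s = 1 := Fin.eq_one_of_ne_zero s hst
      exact Or.inr (mul_apply_mem_span_reducedWords hX hX0 (ih.2 rfl))
    · rintro rfl
      obtain rfl : s = 0 := by omega
      rcases ih.1 rfl with rfl | hY
      · intro i j
        simpa using apply_mul_mem_span_coreducedWords hφ1 hφtr hX hX0 i (k := j) (.one 0)
          fun _ => Or.inl (.one 1)
      · exact mul_apply_mem_span_coreducedWords hφ1 hφtr hc hX hX0 hY

theorem phi2_mul_eq_zero_of_apply_mem_span_reducedWords (hφ1 : φ 1 = 1) (hc : IsRDiagonal φ c)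
    (hfree : AreFree φ ![{a, star a}, {c, star c}]) {X Y : M₂ A}
    (hX : X ∈ Algebra.adjoin ℂ {Amat a})
    (hY : ∀ i j, Y i j ∈ Submodule.span ℂ (reducedWords φ a c i)) : phi2 φ (X * Y) = 0 := by
  have hdiag (i : Fin 2) : (X * Y) i i ∈ LinearMap.ker φ := by
    rw [Matrix.mul_apply]
    exact sum_mem fun k _ => mul_mem_of_mem_span (hY k i) fun _ hy =>
      map_mul_eq_zero_of_mem_reducedWords hφ1 hc hfree
        (apply_mem_adjoin_of_mem_adjoin_Amat hX i k) hy
  simp [phi2, LinearMap.mem_ker.1 (hdiag _)]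

theorem hermitization_free_of_R_diagonal_general (hφ1 : φ 1 = 1)
    (hφtr : ∀ x y : A, φ (x * y) = φ (y * x)) (hc : IsRDiagonal φ c)
    (hfree : AreFree φ ![{a, star a}, {c, star c}]) :
    AreFree (phi2 φ) ![{Amat a}, {Amat c}] := by
  rw [areFree_iff_centeredAltProd]
  intro s X Y hX hX0 hY
  obtain ⟨hY_zero, hY_one⟩ := hY.apply_mem_span hφ1 hφtr hc
  rcases eq_or_ne s 0 with rfl | hs
  · rcases hY_zero rfl with rfl | hY
    · rwa [mul_one]
    · exact phi2_mul_eq_zero_of_apply_mem_span_reducedWords hφ1 hc hfree hX hY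
  · obtain rfl := Fin.eq_one_of_ne_zero s hs
    have hXY := mul_apply_mem_span_reducedWords hX hX0 (hY_one rfl)
    simpa using phi2_mul_eq_zero_of_apply_mem_span_reducedWords hφ1 hc hfree (one_mem _) hXY

end FreeFromRDiagonal

/-- Proposition 5.1: if `c = up` is R-diagonal (with `u` a Haar unitary, `p = p*` with
symmetric distribution, `{u,u*}` free from `{p}`), and `{a,a*}` is free from `{c,c*}`,
then the self-adjoint matrices `A = [[0,a],[a*,0]]` and `S = [[0,c],[c*,0]]` are free
in `(M₂(𝒜), φ₂)`. -/
theorem hermitization_free_of_R_diagonal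
    (φ : A →ₗ[ℂ] ℂ)
    (hφ1 : φ 1 = 1)
    (hφpos : ∀ x : A, 0 ≤ φ (star x * x))
    (hφtr : ∀ x y : A, φ (x * y) = φ (y * x))
    (u p a : A)
    (hu : star u * u = 1) (hu' : u * star u = 1)
    (hHaar : ∀ n : ℕ, 1 ≤ n → φ (u ^ n) = 0 ∧ φ (star u ^ n) = 0)
    (hp : star p = p)
    (hodd : ∀ k : ℕ, Odd k → φ (p ^ k) = 0)
    (hfree_up : AreFree (fun x => φ x) (![{u, star u}, {p}] : Fin 2 → Set A))
    (hfree_ac : AreFree (fun x => φ x)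
      (![{a, star a}, {u * p, star (u * p)}] : Fin 2 → Set A)) :
    AreFree (fun X => phi2 φ X)
      (![{Amat a}, {Amat (u * p)}] : Fin 2 → Set (M₂ A)) := by
  have hu0 : ∀ g ∈ ({u, star u} : Set A), φ g = 0 := by simpa using hHaar 1 le_rfl
  have hc : IsRDiagonal φ (u * p) := isRDiagonal_unitary_mul hφtr ⟨hu, hu'⟩ hu0 hp hodd hfree_up
  exact hermitization_free_of_R_diagonal_general hφ1 hφtr hc hfree_ac
end
end
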